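/- Additive representation of a Markov multiplicative process (converse direction of Theorem 2.4): let (Z, J) be a Markov multiplicative process with respect to (F_t) whose paths are càdlàg and satisfy Z_t ≠ 0 for all t ≥ 0 and Z_{t−} ≠ 0 for all t > 0. Define Ȳ_t := −log|Z_t| and K̄_t := #{s ∈ (0, t] : Z_s/Z_{s−} < 0} (a finite number for each t by the path assumptions). Then ((Ȳ, K̄), J) is a bivariate Markov additive process with respect to (F_t), and Z_t = (−1)^{K̄_t} e^{−Ȳ_t} almost surely for every t ≥ 0; in particular Z_0 = 1 P_j-almost surely for every j ∈ S. -/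

import Mathlib

open MeasureTheory ProbabilityTheory
open scoped NNReal Topology

/-- The number of sign changes of the multiplicative increments of `Z` along the path `ω`
up to time `t`. -/
noncomputable def signChangeCount {Ω : Type*} (Z Zm : ℝ≥0 → Ω → ℝ) (t : ℝ≥0) (ω : Ω) : ℕ :=
  Set.ncard {s : ℝ≥0 | s ∈ Set.Ioc 0 t ∧ Z s ω / Zm s ω < 0}

/-!
A càdlàg path which, together with its left limits, avoids `0` has locally constant sign on either
side of each time. By compactness, every cell of a fine enough grid of `(s, s + t]` contains at most
one sign change, and contains one exactly when the values at its two ends have opposite signs. So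
the increment of `(-log |Z|, K)`, with `K` the number of sign changes, is eventually equal to a sum
of functions of the ratios of `Z` along regular grids. The Markov property of `Z`, read as a
statement about joint laws on events of the past, is preserved by composing consecutive grid
increments and by pointwise limits, hence holds for the increments of `(-log |Z|, K)`.
-/

section SignChanges

variable {ι : Type*}

/-- The times in `(a, b]` at which the path `z` has the opposite sign to its left limits `zm`. -/
def signChangeTimes [Preorder ι] (z zm : ι → ℝ) (a b : ι) : Set ι :=
  Set.Ioc a b ∩ {s | z s / zm s < 0}

/-- `z` is a càdlàg path with left limits `zm`, and neither takes the value `0`. The value of `zm`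
at a least time is unconstrained. -/
structure IsCadlagNonvanishing [Preorder ι] [TopologicalSpace ι] (z zm : ι → ℝ) : Prop where
  continuousWithinAt (t : ι) : ContinuousWithinAt z (Set.Ici t) t
  tendsto_left (t : ι) : ¬IsMin t → Filter.Tendsto z (𝓝[<] t) (𝓝 (zm t))
  ne_zero (t : ι) : z t ≠ 0
  left_ne_zero (t : ι) : ¬IsMin t → zm t ≠ 0

lemma div_neg_iff_sign_ne {x y : ℝ} (hx : x ≠ 0) (hy : y ≠ 0) :
    x / y < 0 ↔ SignType.sign x ≠ SignType.sign y := by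
  rw [div_neg_iff]
  rcases hx.lt_or_gt with hx | hx <;> rcases hy.lt_or_gt with hy | hy <;>
    simp [hx, hy, hx.not_gt, hy.not_gt]

variable [LinearOrder ι]

lemma encard_signChangeTimes_add (z zm : ι → ℝ) {a b c : ι} (hab : a ≤ b) (hbc : b ≤ c) :
    (signChangeTimes z zm a b).encard + (signChangeTimes z zm b c).encard =
      (signChangeTimes z zm a c).encard := by
  have hdisj : Disjoint (signChangeTimes z zm a b) (signChangeTimes z zm b c) :=
    Set.disjoint_left.2 fun s hs hs' => hs.1.2.not_gt hs'.1.1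
  rw [← Set.encard_union_eq hdisj, signChangeTimes, signChangeTimes,
    ← Set.union_inter_distrib_right, Set.Ioc_union_Ioc_eq_Ioc hab hbc, signChangeTimes]

lemma sum_encard_signChangeTimes (z zm : ι → ℝ) {τ : ℕ → ι} (hτ : Monotone τ) (m : ℕ) :
    ∑ k ∈ Finset.range m, (signChangeTimes z zm (τ k) (τ (k + 1))).encard =
      (signChangeTimes z zm (τ 0) (τ m)).encard := by
  induction m with
  | zero => simp [signChangeTimes]
  | succ m ih =>
    rw [Finset.sum_range_succ, ih,
      encard_signChangeTimes_add z zm (hτ m.zero_le) (hτ m.le_succ)]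

namespace IsCadlagNonvanishing

variable {z zm : ι → ℝ}

section Topology

variable [TopologicalSpace ι]

lemma eventually_sign_eq_of_lt (hz : IsCadlagNonvanishing z zm) {t : ι} (ht : ¬IsMin t) :
    ∀ᶠ v in 𝓝[<] t, SignType.sign (z v) = SignType.sign (zm t) := by
  have := (continuousAt_sign_of_ne_zero (hz.left_ne_zero t ht)).tendsto.comp (hz.tendsto_left t ht)
  rwa [nhds_discrete, Filter.tendsto_pure] at this

lemma eventually_sign_eq_of_le (hz : IsCadlagNonvanishing z zm) (t : ι) :
    ∀ᶠ v in 𝓝[≥] t, SignType.sign (z v) = SignType.sign (z t) := by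
  have := (continuousAt_sign_of_ne_zero (hz.ne_zero t)).tendsto.comp (hz.continuousWithinAt t)
  rwa [nhds_discrete, Filter.tendsto_pure] at this

lemma eventually_sign_eq (hz : IsCadlagNonvanishing z zm) (t : ι) :
    ∀ᶠ v in 𝓝 t, SignType.sign (z v) = SignType.sign (if t ≤ v then z t else zm t) := by
  have hright := eventually_nhdsWithin_iff.1 (hz.eventually_sign_eq_of_le t)
  have hleft : ∀ᶠ v in 𝓝 t, v < t → SignType.sign (z v) = SignType.sign (zm t) := by
    by_cases ht : IsMin t
    · exact .of_forall fun v hv => absurd hv ht.not_lt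
    · exact eventually_nhdsWithin_iff.1 (hz.eventually_sign_eq_of_lt ht)
  filter_upwards [hright, hleft] with v hr hl
  split_ifs with htv
  exacts [hr htv, hl (not_le.1 htv)]

lemma div_neg_iff_mem_signChangeTimes (hz : IsCadlagNonvanishing z zm) {t a b : ι} (hab : a ≤ b)
    (ha : SignType.sign (z a) = SignType.sign (if t ≤ a then z t else zm t))
    (hb : SignType.sign (z b) = SignType.sign (if t ≤ b then z t else zm t)) :
    z b / z a < 0 ↔ t ∈ signChangeTimes z zm a b := by
  rw [div_neg_iff_sign_ne (hz.ne_zero b) (hz.ne_zero a), ha, hb]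
  by_cases hta : t ≤ a
  · simp [signChangeTimes, hta, hta.trans hab]
  by_cases htb : t ≤ b
  · have hmin : ¬IsMin t := fun h => hta (h.isBot a)
    simp [signChangeTimes, hta, htb, not_le.1 hta,
      div_neg_iff_sign_ne (hz.ne_zero t) (hz.left_ne_zero t hmin)]
  · simp [signChangeTimes, hta, htb]

variable [OrderTopology ι] [DenselyOrdered ι]

lemma sign_left_eq_of_eventually (hz : IsCadlagNonvanishing z zm) {t : ι} (ht : ¬IsMin t)
    {σ : SignType} (h : ∀ᶠ v in 𝓝[<] t, SignType.sign (z v) = σ) : SignType.sign (zm t) = σ := by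
  obtain ⟨a, ha⟩ := not_isMin_iff.1 ht
  have := nhdsLT_neBot_of_exists_lt ⟨a, ha⟩
  obtain ⟨v, hv, hv'⟩ := (h.and (hz.eventually_sign_eq_of_lt ht)).exists
  exact hv'.symm.trans hv

lemma eventually_not_div_neg (hz : IsCadlagNonvanishing z zm) (t : ι) :
    ∀ᶠ u in 𝓝 t, u ≠ t → ¬IsMin u → ¬z u / zm u < 0 := by
  filter_upwards [(hz.eventually_sign_eq t).eventually_nhds] with u hu hut hmin
  rw [div_neg_iff_sign_ne (hz.ne_zero u) (hz.left_ne_zero u hmin), not_not, eq_comm,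
    hu.self_of_nhds]
  refine hz.sign_left_eq_of_eventually hmin ?_
  rcases hut.lt_or_gt with hlt | hlt
  · filter_upwards [hu.filter_mono nhdsWithin_le_nhds, self_mem_nhdsWithin] with v hv hvu
    rw [hv, if_neg (hvu.trans hlt).not_ge, if_neg hlt.not_ge]
  · filter_upwards [hu.filter_mono nhdsWithin_le_nhds,
      mem_nhdsWithin_of_mem_nhds (Ioi_mem_nhds hlt)] with v hv hvu
    rw [hv, if_pos hvu.le, if_pos hlt.le]

lemma eventually_encard_signChangeTimes (hz : IsCadlagNonvanishing z zm) (t : ι) :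
    ∀ᶠ p : ι × ι in 𝓝 (t, t), p.1 ≤ p.2 →
      (signChangeTimes z zm p.1 p.2).encard = if z p.2 / z p.1 < 0 then 1 else 0 := by
  have hIcc : ∀ᶠ p : ι × ι in 𝓝 (t, t), ∀ u ∈ Set.Icc p.1 p.2, u ≠ t → ¬IsMin u →
      ¬z u / zm u < 0 :=
    (continuous_fst.tendsto (t, t)).Icc (continuous_snd.tendsto (t, t)) |>.eventually
      (hz.eventually_not_div_neg t).smallSets
  filter_upwards [hIcc, (continuous_fst.tendsto (t, t)).eventually (hz.eventually_sign_eq t),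
    (continuous_snd.tendsto (t, t)).eventually (hz.eventually_sign_eq t)] with ⟨a, b⟩ hIcc ha hb hab
  have hsub : signChangeTimes z zm a b ⊆ {t} := fun u ⟨hu, hneg⟩ => by
    by_contra hut
    exact hIcc u (Set.Ioc_subset_Icc_self hu) hut (not_isMin_iff.2 ⟨a, hu.1⟩) hneg
  have hmem := hz.div_neg_iff_mem_signChangeTimes hab ha hb
  split_ifs with hneg
  · rw [Set.encard_eq_one]
    exact ⟨t, hsub.antisymm (Set.singleton_subset_iff.2 (hmem.1 hneg))⟩
  · rw [Set.encard_eq_zero, Set.eq_empty_iff_forall_notMem]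
    intro u hu
    obtain rfl := hsub hu
    exact hneg (hmem.2 hu)

end Topology

lemma exists_forall_dist_lt_encard_signChangeTimes [PseudoMetricSpace ι] [OrderTopology ι]
    [DenselyOrdered ι] (hz : IsCadlagNonvanishing z zm) {K : Set ι} (hK : IsCompact K) :
    ∃ δ > 0, ∀ a ∈ K, ∀ b, a ≤ b → dist b a < δ →
      (signChangeTimes z zm a b).encard = if z b / z a < 0 then 1 else 0 := by
  choose ε hε hlocal using fun t =>
    Metric.eventually_nhds_iff_ball.1 (hz.eventually_encard_signChangeTimes t)
  obtain ⟨δ, hδ, hball⟩ := lebesgue_number_lemma_of_metric hK (c := fun t => Metric.ball t (ε t))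
    (fun t => Metric.isOpen_ball) fun t _ => Set.mem_iUnion.2 ⟨t, Metric.mem_ball_self (hε t)⟩
  refine ⟨δ, hδ, fun a ha b hab hdist => ?_⟩
  obtain ⟨t, ht⟩ := hball a ha
  refine hlocal t (a, b) ?_ hab
  rw [← ball_prod_same]
  exact ⟨ht (Metric.mem_ball_self hδ), ht hdist⟩

end IsCadlagNonvanishing

end SignChanges

section RegularGrid

/-- The grid of times dividing `(s, s + t]` into `n + 1` intervals of equal length. -/
noncomputable def regularGrid (s t : ℝ≥0) (n k : ℕ) : ℝ≥0 := s + k • (t / (n + 1))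

lemma regularGrid_zero (s t : ℝ≥0) (n : ℕ) : regularGrid s t n 0 = s := by simp [regularGrid]

lemma succ_nsmul_div_succ (t : ℝ≥0) (n : ℕ) : (n + 1) • (t / (n + 1)) = t := by
  rw [nsmul_eq_mul, Nat.cast_succ]; exact mul_div_cancel₀ t (by positivity)

lemma regularGrid_last (s t : ℝ≥0) (n : ℕ) : regularGrid s t n (n + 1) = s + t := by
  rw [regularGrid, succ_nsmul_div_succ]

lemma monotone_regularGrid (s t : ℝ≥0) (n : ℕ) : Monotone (regularGrid s t n) := fun _ _ h =>
  add_le_add_right (nsmul_le_nsmul_left zero_le h) s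

lemma regularGrid_succ (s t : ℝ≥0) (n k : ℕ) :
    regularGrid s t n (k + 1) = regularGrid s t n k + t / (n + 1) := by
  rw [regularGrid, regularGrid, succ_nsmul, add_assoc]

lemma dist_regularGrid_succ (s t : ℝ≥0) (n k : ℕ) :
    dist (regularGrid s t n (k + 1)) (regularGrid s t n k) = t / (n + 1) := by
  rw [regularGrid_succ, NNReal.dist_eq, NNReal.coe_add, add_sub_cancel_left, NNReal.abs_eq,
    NNReal.coe_div, NNReal.coe_add, NNReal.coe_natCast, NNReal.coe_one]

namespace IsCadlagNonvanishing

variable {z zm : ℝ≥0 → ℝ}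

lemma eventually_encard_signChangeTimes_eq_sum (hz : IsCadlagNonvanishing z zm) (s t : ℝ≥0) :
    ∀ᶠ n in Filter.atTop, (signChangeTimes z zm s (s + t)).encard =
      ∑ k ∈ Finset.range (n + 1),
        if z (regularGrid s t n (k + 1)) / z (regularGrid s t n k) < 0 then 1 else 0 := by
  obtain ⟨δ, hδ, hcount⟩ :=
    hz.exists_forall_dist_lt_encard_signChangeTimes (isCompact_Icc (a := s) (b := s + t))
  have hmesh : Filter.Tendsto (fun n : ℕ => (t : ℝ) / (n + 1)) Filter.atTop (𝓝 0) := by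
    simpa only [Function.comp_def, Nat.cast_succ] using
      (tendsto_const_div_atTop_nhds_zero_nat (t : ℝ)).comp (Filter.tendsto_add_atTop_nat 1)
  filter_upwards [hmesh.eventually_lt_const hδ] with n hn
  have hmono := monotone_regularGrid s t n
  have hsum := sum_encard_signChangeTimes z zm hmono (n + 1)
  rw [regularGrid_zero, regularGrid_last] at hsum
  rw [← hsum]
  refine Finset.sum_congr rfl fun k hk => hcount _ ⟨?_, ?_⟩ _ (hmono k.le_succ) ?_
  · exact (regularGrid_zero s t n).symm.trans_le (hmono k.zero_le)
  · exact (hmono (Finset.mem_range.1 hk).le).trans_eq (regularGrid_last s t n)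
  · rwa [dist_regularGrid_succ]

lemma finite_signChangeTimes (hz : IsCadlagNonvanishing z zm) {a b : ℝ≥0} (hab : a ≤ b) :
    (signChangeTimes z zm a b).Finite := by
  obtain ⟨n, hn⟩ := (hz.eventually_encard_signChangeTimes_eq_sum a (b - a)).exists
  rw [add_tsub_cancel_of_le hab] at hn
  rw [← Set.encard_lt_top_iff, hn]
  exact ENat.sum_lt_top.2 fun k _ => by split_ifs <;> simp

lemma eventually_ncard_signChangeTimes_eq_sum (hz : IsCadlagNonvanishing z zm) (s t : ℝ≥0) :
    ∀ᶠ n in Filter.atTop, (signChangeTimes z zm s (s + t)).ncard =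
      ∑ k ∈ Finset.range (n + 1),
        if z (regularGrid s t n (k + 1)) / z (regularGrid s t n k) < 0 then 1 else 0 := by
  filter_upwards [hz.eventually_encard_signChangeTimes_eq_sum s t] with n hn
  rw [← Nat.cast_inj (R := ℕ∞), (hz.finite_signChangeTimes le_self_add).cast_ncard_eq, hn]
  push_cast
  rfl

end IsCadlagNonvanishing

end RegularGrid

section LogSign

/-- The multiplicative increment `x` in additive coordinates: the increment of `-log |·|`, and `1`
or `0` according to whether the sign changes. -/
noncomputable def logSign (x : ℝ) : ℝ × ℝ := (-Real.log |x|, if x < 0 then 1 else 0)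

lemma measurable_logSign : Measurable logSign := by
  unfold logSign
  exact (by fun_prop : Measurable fun x : ℝ => -Real.log |x|).prodMk
    (measurable_const.ite measurableSet_Iio measurable_const)

lemma sum_range_logSign_div {x : ℕ → ℝ} (hx : ∀ k, x k ≠ 0) (m : ℕ) :
    ∑ k ∈ Finset.range m, logSign (x (k + 1) / x k) =
      (-Real.log |x m| - -Real.log |x 0|,
        ((∑ k ∈ Finset.range m, if x (k + 1) / x k < 0 then 1 else 0 : ℕ) : ℝ)) := by
  have hlog : ∀ k, -Real.log |x (k + 1) / x k| = -Real.log |x (k + 1)| - -Real.log |x k| :=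
    fun k => by
      rw [abs_div, Real.log_div (abs_ne_zero.2 (hx _)) (abs_ne_zero.2 (hx _))]
      ring
  simp only [logSign, Prod.ext_iff, Prod.fst_sum, Prod.snd_sum, hlog]
  exact ⟨Finset.sum_range_sub (fun k => -Real.log |x k|) m, by push_cast; rfl⟩

lemma eq_neg_one_pow_mul_abs (x : ℝ) : x = (-1) ^ (if x < 0 then 1 else 0) * |x| := by
  split_ifs with hx
  · rw [pow_one, abs_of_neg hx, neg_one_mul, neg_neg]
  · rw [pow_zero, one_mul, abs_of_nonneg (not_lt.1 hx)]

lemma div_eq_neg_one_pow_sum_mul_abs {x : ℕ → ℝ} (hx : ∀ k, x k ≠ 0) (m : ℕ) :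
    x m / x 0 =
      (-1) ^ (∑ k ∈ Finset.range m, if x (k + 1) / x k < 0 then 1 else 0) * |x m / x 0| := by
  induction m with
  | zero => simp [hx 0]
  | succ m ih =>
    have hmul : x (m + 1) / x 0 = x m / x 0 * (x (m + 1) / x m) := by
      rw [mul_comm, div_mul_div_cancel₀ (hx m)]
    rw [Finset.sum_range_succ, pow_add, hmul, abs_mul, mul_mul_mul_comm, ← ih,
      ← eq_neg_one_pow_mul_abs]

/-- The increment of `-log |z|` over `(s, s + t]`, together with the number of sign changes of `z`
between consecutive points of the regular grid. -/
noncomputable def gridIncrement (z : ℝ≥0 → ℝ) (s t : ℝ≥0) (n : ℕ) : ℝ × ℝ :=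
  ∑ k ∈ Finset.range (n + 1), logSign (z (regularGrid s t n (k + 1)) / z (regularGrid s t n k))

end LogSign

namespace IsCadlagNonvanishing

variable {z zm : ℝ≥0 → ℝ}

lemma eventually_gridIncrement_eq (hz : IsCadlagNonvanishing z zm) (s t : ℝ≥0) :
    ∀ᶠ n in Filter.atTop, gridIncrement z s t n =
      (-Real.log |z (s + t)| - -Real.log |z s|, ((signChangeTimes z zm s (s + t)).ncard : ℝ)) := by
  filter_upwards [hz.eventually_ncard_signChangeTimes_eq_sum s t] with n hn
  have hsum := sum_range_logSign_div (x := z ∘ regularGrid s t n) (fun _ => hz.ne_zero _) (n + 1)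
  simpa only [gridIncrement, Function.comp_apply, regularGrid_zero, regularGrid_last, ← hn]
    using hsum

lemma div_eq_neg_one_pow_ncard_mul_abs (hz : IsCadlagNonvanishing z zm) {a b : ℝ≥0} (hab : a ≤ b) :
    z b / z a = (-1) ^ (signChangeTimes z zm a b).ncard * |z b / z a| := by
  obtain ⟨n, hn⟩ := (hz.eventually_ncard_signChangeTimes_eq_sum a (b - a)).exists
  have hprod := div_eq_neg_one_pow_sum_mul_abs (x := z ∘ regularGrid a (b - a) n)
    (fun _ => hz.ne_zero _) (n + 1)
  simp only [Function.comp_apply, regularGrid_zero, regularGrid_last, ← hn,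
    add_tsub_cancel_of_le hab] at hprod
  exact hprod

end IsCadlagNonvanishing

section MarkovIncrements

variable {ι Ω S E E' : Type*} [Preorder ι] [AddMonoid ι] {mΩ : MeasurableSpace Ω}
  [MeasurableSpace S] [MeasurableSpace E] [MeasurableSpace E']

/-- The Markov property shared by additive and multiplicative processes, for one time span `t`:
`X s` is the increment over `(s, s + t]` (difference or ratio), and `X₀` is the value at time `t` of
the process itself, which stands for the increment from time `0`. -/
def HasMarkovIncrements (P : Kernel S Ω) (ℱ : Filtration ι mΩ) (J : ι → Ω → S) (t : ι)
    (X : ι → Ω → E) (X₀ : Ω → E) : Prop :=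
  ∀ (j : S) (s : ι) (f : E → ℝ) (g : S → ℝ),
    Measurable f → (∃ C, ∀ x, |f x| ≤ C) → Measurable g → (∃ C, ∀ x, |g x| ≤ C) →
    (P j)[(fun ω => f (X s ω) * g (J (s + t) ω)) | ℱ s]
      =ᵐ[P j] fun ω => ∫ ω', f (X₀ ω') * g (J t ω') ∂(P (J s ω))

/-- The Markov property of the increments `X` over the time span `t`, in terms of laws: restricted
to any event of the past `ℱ s`, the joint law of `(X s, J (s + t))` is the mixture over the law of
`J s` of the laws of `(X 0, J t)`. In this form it passes to images, sums and limits of `X`. -/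
def HasMarkovIncrementLaw (P : Kernel S Ω) (ℱ : Filtration ι mΩ) (J : ι → Ω → S) (t : ι)
    (X : ι → Ω → E) : Prop :=
  ∀ (j : S) (s : ι) (A : Set Ω), MeasurableSet[ℱ s] A →
    ((P j).restrict A).map (fun ω => (X s ω, J (s + t) ω)) =
      P.map (fun ω => (X 0 ω, J t ω)) ∘ₘ ((P j).restrict A).map (J s)

variable {P : Kernel S Ω} {ℱ : Filtration ι mΩ} {J : ι → Ω → S} {t u : ι}
  {X : ι → Ω → E} {Y : ι → Ω → E'} {X₀ : Ω → E}

lemma integral_comp_map {α β γ : Type*} [MeasurableSpace α] [MeasurableSpace β]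
    [MeasurableSpace γ] {μ : Measure α} [IsFiniteMeasure μ] {κ : Kernel β γ} [IsFiniteKernel κ]
    {φ : α → β} (hφ : Measurable φ) {G : γ → ℝ} (hG : Measurable G) {C : ℝ}
    (hC : ∀ x, |G x| ≤ C) :
    ∫ x, G x ∂(κ ∘ₘ μ.map φ) = ∫ a, ∫ x, G x ∂κ (φ a) ∂μ := by
  rw [Measure.comp_eq_comp_const_apply, Kernel.integral_comp, Kernel.const_apply,
    integral_map hφ.aemeasurable hG.stronglyMeasurable.integral_kernel.aestronglyMeasurable]
  exact .of_bound hG.aestronglyMeasurable C (.of_forall hC)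

lemma hasMarkovIncrementLaw_of_comp_eq (hJ : Adapted ℱ J) (hJ0 : ∀ j, ∀ᵐ ω ∂P j, J 0 ω = j)
    [IsMarkovKernel P] (hX : Measurable (X 0)) {κ : Kernel S (E × S)}
    (h : ∀ j s A, MeasurableSet[ℱ s] A →
      ((P j).restrict A).map (fun ω => (X s ω, J (s + t) ω)) = κ ∘ₘ ((P j).restrict A).map (J s)) :
    HasMarkovIncrementLaw P ℱ J t X := by
  -- The kernel is determined by its values at time `0`, where `J 0` is concentrated at `k`.
  suffices hκ : κ = P.map (fun ω => (X 0 ω, J t ω)) by rwa [hκ] at h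
  ext1 k
  have hk := h k 0 Set.univ .univ
  rw [Measure.restrict_univ, Measure.map_congr (hJ0 k), Measure.map_const, measure_univ, one_smul,
    Measure.dirac_bind κ.measurable, zero_add] at hk
  rw [Kernel.map_apply _ (hX.prodMk hJ.measurable), hk]

lemma HasMarkovIncrementLaw.comp (h : HasMarkovIncrementLaw P ℱ J t X) (hJ : Adapted ℱ J)
    (hX : ∀ s, Measurable (X s)) {φ : E → E'} (hφ : Measurable φ) :
    HasMarkovIncrementLaw P ℱ J t fun s ω => φ (X s ω) := by
  intro j s A hA
  have hφ' : Measurable (Prod.map φ (id : S → S)) := hφ.prodMap measurable_id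
  have hXJ : ∀ s t, Measurable fun ω => (X s ω, J t ω) := fun s t => (hX s).prodMk hJ.measurable
  have := congrArg (Measure.map (Prod.map φ id)) (h j s A hA)
  rwa [Measure.map_map hφ' (hXJ s _), Measure.map_comp _ _ hφ',
    ← Kernel.map_comp_right _ (hXJ 0 t) hφ'] at this

lemma HasMarkovIncrementLaw.const (hJ : Adapted ℱ J) (hJ0 : ∀ j, ∀ᵐ ω ∂P j, J 0 ω = j)
    [IsMarkovKernel P] (c : E) : HasMarkovIncrementLaw P ℱ J 0 fun _ _ => c := by
  have hc : Measurable fun k : S => (c, k) := by fun_prop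
  refine hasMarkovIncrementLaw_of_comp_eq hJ hJ0 measurable_const
    (κ := Kernel.deterministic (fun k => (c, k)) hc) fun j s A _ => ?_
  rw [Measure.deterministic_comp_eq_map, Measure.map_map hc hJ.measurable, add_zero]
  rfl

lemma HasMarkovIncrementLaw.map_prodMk [IsMarkovKernel P] (h : HasMarkovIncrementLaw P ℱ J t X)
    (hJ : Adapted ℱ J) (hX : ∀ s, Measurable (X s)) {s : ι} {V : Ω → E'}
    (hV : Measurable[ℱ s] V) (j : S) {A : Set Ω} (hA : MeasurableSet[ℱ s] A) :
    ((P j).restrict A).map (fun ω => ((V ω, J s ω), (X s ω, J (s + t) ω))) =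
      ((P j).restrict A).map (fun ω => (V ω, J s ω)) ⊗ₘ
        (P.map fun ω => (X 0 ω, J t ω)).prodMkLeft E' := by
  have hXJ : ∀ s t, Measurable fun ω => (X s ω, J t ω) := fun s t => (hX s).prodMk hJ.measurable
  have hVJ : Measurable[ℱ s] fun ω => (V ω, J s ω) := hV.prodMk (hJ s)
  have hVJ' : Measurable fun ω => (V ω, J s ω) := hVJ.mono (ℱ.le s) le_rfl
  have := Kernel.IsMarkovKernel.map P (hXJ 0 t)
  refine Measure.ext_prod fun {B C} hB hC => ?_
  have hlaw := congrArg (fun ν => ν C) (h j s _ ((hVJ hB).inter hA))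
  rw [Measure.map_apply (hXJ s _) hC, Measure.bind_apply hC (Kernel.aemeasurable _),
    lintegral_map (Kernel.measurable_coe _ hC) hJ.measurable,
    Measure.restrict_apply (hXJ s _ hC)] at hlaw
  rw [Measure.map_apply (hVJ'.prodMk (hXJ s _)) (hB.prod hC), Measure.compProd_apply_prod hB hC,
    Measure.restrict_map hVJ' hB, Measure.restrict_restrict (hVJ' hB),
    lintegral_map (Kernel.measurable_coe _ hC) hVJ', Measure.restrict_apply
      (hVJ'.prodMk (hXJ s _) (hB.prod hC))]
  simp only [Kernel.prodMkLeft_apply]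
  rw [← hlaw, ← Set.inter_assoc]
  congr 2
  exact Set.inter_comm _ _

lemma HasMarkovIncrementLaw.prodMk [CanonicallyOrderedAdd ι] [IsMarkovKernel P]
    (hX : HasMarkovIncrementLaw P ℱ J t X) (hY : HasMarkovIncrementLaw P ℱ J u Y)
    (hJ : Adapted ℱ J) (hJ0 : ∀ j, ∀ᵐ ω ∂P j, J 0 ω = j) (hXm : ∀ s, Measurable[ℱ (s + t)] (X s))
    (hYm : ∀ s, Measurable (Y s)) :
    HasMarkovIncrementLaw P ℱ J (t + u) fun s ω => (X s ω, Y (s + t) ω) := by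
  have hXm' : ∀ s, Measurable (X s) := fun s => (hXm s).mono (ℱ.le _) le_rfl
  have hYJ : ∀ s t, Measurable fun ω => (Y s ω, J t ω) := fun s t => (hYm s).prodMk hJ.measurable
  let φ : (E × S) × (E' × S) → (E × E') × S := fun p => ((p.1.1, p.2.1), p.2.2)
  have hφ : Measurable φ := by fun_prop
  have := Kernel.IsMarkovKernel.map P (hYJ 0 u)
  let κX := P.map fun ω => (X 0 ω, J t ω)
  let κY := P.map fun ω => (Y 0 ω, J u ω)
  refine hasMarkovIncrementLaw_of_comp_eq hJ hJ0 ((hXm' 0).prodMk (hYm _))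
    (κ := ((Kernel.id ×ₖ κY.prodMkLeft E).map φ) ∘ₖ κX) fun j s A hA => ?_
  have hjoint := congrArg (Measure.map φ) <|
    hY.map_prodMk hJ hYm (hXm s) j (ℱ.mono le_self_add A hA)
  rwa [hX j s A hA, Measure.compProd_eq_comp_prod, Measure.map_comp _ _ hφ, Measure.comp_assoc,
    Measure.map_map hφ (((hXm' s).prodMk hJ.measurable).prodMk (hYJ _ _)), add_assoc] at hjoint

lemma HasMarkovIncrementLaw.sum_range [CanonicallyOrderedAdd ι] [IsMarkovKernel P]
    {E : Type*} [MeasurableSpace E] [AddCommMonoid E] [MeasurableAdd₂ E] {X : ι → Ω → E}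
    (h : HasMarkovIncrementLaw P ℱ J t X)
    (hJ : Adapted ℱ J) (hJ0 : ∀ j, ∀ᵐ ω ∂P j, J 0 ω = j) (hX : ∀ s, Measurable[ℱ (s + t)] (X s))
    (m : ℕ) :
    HasMarkovIncrementLaw P ℱ J (m • t) fun s ω => ∑ k ∈ Finset.range m, X (s + k • t) ω := by
  have hX' : ∀ s, Measurable (X s) := fun s => (hX s).mono (ℱ.le _) le_rfl
  induction m with
  | zero => simpa using HasMarkovIncrementLaw.const hJ hJ0 (0 : E)
  | succ m ih =>
    have hsum : ∀ s, Measurable[ℱ (s + m • t)] fun ω => ∑ k ∈ Finset.range m, X (s + k • t) ω := by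
      refine fun s => Finset.measurable_fun_sum _ fun k hk => (hX _).mono (ℱ.mono ?_) le_rfl
      rw [add_assoc, ← succ_nsmul]
      exact add_le_add_right (nsmul_le_nsmul_left zero_le (Finset.mem_range.1 hk)) s
    simp only [Finset.sum_range_succ, succ_nsmul]
    exact (ih.prodMk h hJ hJ0 hsum hX').comp hJ (fun s => ((hsum s).mono (ℱ.le _) le_rfl).prodMk
      (hX' _)) measurable_add

lemma measurable_of_eventually_eq {X : ℕ → Ω → E} {X' : Ω → E} (hX : ∀ n, Measurable (X n))
    (h : ∀ ω, ∀ᶠ n in Filter.atTop, X n ω = X' ω) : Measurable X' := fun B hB =>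
  measurableSet_of_tendsto_indicator Filter.atTop (fun n => hX n hB) fun ω =>
    (h ω).mono fun n hn => by simp only [Set.mem_preimage, hn]

lemma tendsto_map_apply_of_eventually_eq {X : ℕ → Ω → E} {X' : Ω → E} (hX : ∀ n, Measurable (X n))
    (h : ∀ ω, ∀ᶠ n in Filter.atTop, X n ω = X' ω) (μ : Measure Ω) [IsFiniteMeasure μ] {B : Set E}
    (hB : MeasurableSet B) :
    Filter.Tendsto (fun n => μ.map (X n) B) Filter.atTop (𝓝 (μ.map X' B)) := by
  simp only [Measure.map_apply (hX _) hB, Measure.map_apply (measurable_of_eventually_eq hX h) hB]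
  exact tendsto_measure_of_tendsto_indicator_of_isFiniteMeasure _ μ (fun n => hX n hB) fun ω =>
    (h ω).mono fun n hn => by simp only [Set.mem_preimage, hn]

lemma hasMarkovIncrementLaw_of_eventually_eq [IsMarkovKernel P] {X : ℕ → ι → Ω → E}
    {X' : ι → Ω → E} (hJ : Adapted ℱ J) (hX : ∀ n s, Measurable (X n s))
    (hlaw : ∀ n, HasMarkovIncrementLaw P ℱ J t (X n))
    (h : ∀ s ω, ∀ᶠ n in Filter.atTop, X n s ω = X' s ω) :
    HasMarkovIncrementLaw P ℱ J t X' := by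
  intro j s A hA
  have hXJ : ∀ s t n, Measurable fun ω => (X n s ω, J t ω) := fun s t n =>
    (hX n s).prodMk hJ.measurable
  have hlim : ∀ s t ω, ∀ᶠ n in Filter.atTop, (X n s ω, J t ω) = (X' s ω, J t ω) :=
    fun s t ω => (h s ω).mono fun n hn => by rw [hn]
  have hXJ' : Measurable fun ω => (X' 0 ω, J t ω) :=
    measurable_of_eventually_eq (hXJ 0 t) (hlim 0 t)
  ext B hB
  refine tendsto_nhds_unique (tendsto_map_apply_of_eventually_eq (hXJ s _) (hlim s _) _ hB) ?_
  simp only [hlaw _ j s A hA, Measure.bind_apply hB (Kernel.aemeasurable _)]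
  refine tendsto_lintegral_of_dominated_convergence 1 (fun n => Kernel.measurable_coe _ hB)
    (fun n => .of_forall fun k => ?_) (by simp) (.of_forall fun k => ?_)
  · have := Kernel.IsMarkovKernel.map P (hXJ 0 t n)
    exact prob_le_one
  · simp only [Kernel.map_apply _ hXJ', Kernel.map_apply _ (hXJ 0 t _)]
    exact tendsto_map_apply_of_eventually_eq (hXJ 0 t) (hlim 0 t) _ hB

lemma HasMarkovIncrementLaw.setIntegral_eq [IsMarkovKernel P]
    (h : HasMarkovIncrementLaw P ℱ J t X) (hJ : Adapted ℱ J) (hX : ∀ s, Measurable (X s))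
    {G : E × S → ℝ} (hG : Measurable G) {C : ℝ} (hC : ∀ x, |G x| ≤ C) (j : S) {s : ι}
    {A : Set Ω} (hA : MeasurableSet[ℱ s] A) :
    ∫ ω in A, G (X s ω, J (s + t) ω) ∂P j =
      ∫ ω in A, ∫ x, G x ∂P.map (fun ω => (X 0 ω, J t ω)) (J s ω) ∂P j := by
  have hXJ : ∀ s t, Measurable fun ω => (X s ω, J t ω) := fun s t => (hX s).prodMk hJ.measurable
  have := Kernel.IsMarkovKernel.map P (hXJ 0 t)
  rw [← integral_comp_map hJ.measurable hG hC, ← h j s A hA,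
    integral_map (hXJ s _).aemeasurable hG.aestronglyMeasurable]

lemma HasMarkovIncrementLaw.condExp_ae_eq [IsMarkovKernel P]
    (h : HasMarkovIncrementLaw P ℱ J t X) (hJ : Adapted ℱ J) (hX : ∀ s, Measurable (X s))
    {G : E × S → ℝ} (hG : Measurable G) {C : ℝ} (hC : ∀ x, |G x| ≤ C) (j : S) (s : ι) :
    (P j)[(fun ω => G (X s ω, J (s + t) ω)) | ℱ s]
      =ᵐ[P j] fun ω => ∫ ω', G (X 0 ω', J t ω') ∂P (J s ω) := by
  have hXJ : ∀ s t, Measurable fun ω => (X s ω, J t ω) := fun s t => (hX s).prodMk hJ.measurable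
  let κ := P.map fun ω => (X 0 ω, J t ω)
  have : IsMarkovKernel κ := Kernel.IsMarkovKernel.map P (hXJ 0 t)
  have hκ : ∀ k, ∫ x, G x ∂κ k = ∫ ω, G (X 0 ω, J t ω) ∂P k := fun k => by
    rw [Kernel.map_apply _ (hXJ 0 t), integral_map (hXJ 0 t).aemeasurable hG.aestronglyMeasurable]
  have hmeas : StronglyMeasurable[ℱ s] fun ω => ∫ x, G x ∂κ (J s ω) :=
    (hG.stronglyMeasurable.integral_kernel (κ := κ)).comp_measurable (hJ s)
  have hint : Integrable (fun ω => ∫ x, G x ∂κ (J s ω)) (P j) :=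
    .of_bound (hmeas.mono (ℱ.le s)).aestronglyMeasurable C <| .of_forall fun ω => by
      simpa using norm_integral_le_of_norm_le_const (μ := κ (J s ω)) (f := G) (.of_forall hC)
  simp only [← hκ]
  refine (ae_eq_condExp_of_forall_setIntegral_eq (ℱ.le s) ?_ (fun _ _ _ => hint.integrableOn)
    (fun A hA _ => (h.setIntegral_eq hJ hX hG hC j hA).symm) hmeas.aestronglyMeasurable).symm
  exact .of_bound (hG.comp (hXJ s _)).aestronglyMeasurable C (.of_forall fun _ => hC _)

lemma HasMarkovIncrementLaw.hasMarkovIncrements [IsMarkovKernel P]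
    (h : HasMarkovIncrementLaw P ℱ J t X) (hJ : Adapted ℱ J) (hX : ∀ s, Measurable (X s)) :
    HasMarkovIncrements P ℱ J t X (X 0) := by
  rintro j s f g hf ⟨C, hC⟩ hg ⟨D, hD⟩
  have hG : Measurable fun p : E × S => f p.1 * g p.2 := by fun_prop
  refine h.condExp_ae_eq hJ hX hG (C := C * D) (fun p => ?_) j s
  rw [abs_mul]
  exact mul_le_mul (hC _) (hD _) (abs_nonneg _) ((abs_nonneg _).trans (hC p.1))

lemma HasMarkovIncrements.congr {X₀' : Ω → E} (h : HasMarkovIncrements P ℱ J t X X₀)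
    (hX₀ : ∀ k, X₀ =ᵐ[P k] X₀') : HasMarkovIncrements P ℱ J t X X₀' := by
  intro j s f g hf hfC hg hgC
  refine (h j s f g hf hfC hg hgC).trans (.of_forall fun ω => integral_congr_ae ?_)
  filter_upwards [hX₀ (J s ω)] with ω' hω'
  rw [hω']

lemma HasMarkovIncrements.condExp_indicator_ae_eq (h : HasMarkovIncrements P ℱ J t X X₀)
    (hJ : Adapted ℱ J) (hX₀ : Measurable X₀) {B : Set E} {C : Set S} (hB : MeasurableSet B)
    (hC : MeasurableSet C) (j : S) (s : ι) :
    (P j)[((fun ω => (X s ω, J (s + t) ω)) ⁻¹' B ×ˢ C).indicator 1 | ℱ s]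
      =ᵐ[P j] fun ω => (P (J s ω)).real ((fun ω' => (X₀ ω', J t ω')) ⁻¹' B ×ˢ C) := by
  have hprod : ∀ (V : Ω → E) (W : Ω → S) ω, B.indicator (1 : E → ℝ) (V ω) *
      C.indicator (1 : S → ℝ) (W ω) = ((fun ω => (V ω, W ω)) ⁻¹' B ×ˢ C).indicator 1 ω :=
    fun V W ω => by by_cases hV : V ω ∈ B <;> by_cases hW : W ω ∈ C <;> simp [hV, hW]
  have hind := h j s (B.indicator 1) (C.indicator 1) (measurable_one.indicator hB)
    ⟨1, fun x => (norm_indicator_le_norm_self (1 : E → ℝ) x).trans_eq norm_one⟩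
    (measurable_one.indicator hC)
    ⟨1, fun x => (norm_indicator_le_norm_self (1 : S → ℝ) x).trans_eq norm_one⟩
  simpa only [hprod, integral_indicator_one ((hX₀.prodMk hJ.measurable) (hB.prod hC))] using hind

lemma HasMarkovIncrements.hasMarkovIncrementLaw [IsMarkovKernel P]
    (h : HasMarkovIncrements P ℱ J t X (X 0)) (hJ : Adapted ℱ J) (hX : ∀ s, Measurable (X s)) :
    HasMarkovIncrementLaw P ℱ J t X := by
  intro j s A hA
  have hXJ : ∀ s t, Measurable fun ω => (X s ω, J t ω) := fun s t => (hX s).prodMk hJ.measurable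
  have := Kernel.IsMarkovKernel.map P (hXJ 0 t)
  refine Measure.ext_prod fun {B C} hB hC => ?_
  have hBC := hB.prod hC
  let p : S → ℝ := fun k => (P k).real ((fun ω => (X 0 ω, J t ω)) ⁻¹' B ×ˢ C)
  have hp : Measurable p := (P.measurable_coe (hXJ 0 t hBC)).ennreal_toReal
  have hint : ∫ ω in A, p (J s ω) ∂P j =
      ((P j).restrict A).real ((fun ω => (X s ω, J (s + t) ω)) ⁻¹' B ×ˢ C) := by
    rw [← integral_indicator_one (hXJ s _ hBC), ← setIntegral_condExp (ℱ.le s)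
      (f := Set.indicator _ 1) ((integrable_const (1 : ℝ)).indicator (hXJ s _ hBC)) hA]
    exact setIntegral_congr_ae (ℱ.le s _ hA)
      ((h.condExp_indicator_ae_eq hJ (hX 0) hB hC j s).mono fun ω hω _ => hω.symm)
  rw [Measure.map_apply (hXJ s _) hBC, Measure.bind_apply hBC (Kernel.aemeasurable _),
    lintegral_map (Kernel.measurable_coe _ hBC) hJ.measurable, ← ofReal_measureReal, ← hint,
    ofReal_integral_eq_lintegral_ofReal]
  · exact lintegral_congr fun ω => by
      rw [ofReal_measureReal, Kernel.map_apply' _ (hXJ 0 t) _ hBC]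
  · exact .of_bound (hp.comp hJ.measurable).aestronglyMeasurable 1 (.of_forall fun ω =>
      (Real.norm_of_nonneg measureReal_nonneg).trans_le measureReal_le_one)
  · exact .of_forall fun ω => measureReal_nonneg

lemma HasMarkovIncrements.ae_eq_const [IsMarkovKernel P] [MeasurableSingletonClass E] {c : E}
    (h : HasMarkovIncrements P ℱ J 0 (fun _ _ => c) X₀) (hJ : Adapted ℱ J)
    (hJ0 : ∀ j, ∀ᵐ ω ∂P j, J 0 ω = j) (hX₀ : Measurable X₀) (j : S) : ∀ᵐ ω ∂P j, X₀ ω = c := by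
  have hc := h.condExp_indicator_ae_eq hJ hX₀ (.singleton c) .univ j 0
  have huniv : (fun ω => (c, J (0 + 0) ω)) ⁻¹' {c} ×ˢ Set.univ = Set.univ :=
    Set.eq_univ_of_forall fun _ => ⟨rfl, trivial⟩
  rw [huniv, Set.indicator_univ, Pi.one_def, condExp_const (ℱ.le 0)] at hc
  obtain ⟨ω, hω, hj⟩ := (hc.and (hJ0 j)).exists
  simp only [hj] at hω
  rw [measureReal_def, eq_comm, ENNReal.toReal_eq_one_iff] at hω
  have hmeas : MeasurableSet ((fun ω => (X₀ ω, J 0 ω)) ⁻¹' {c} ×ˢ Set.univ) :=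
    (hX₀.prodMk hJ.measurable) ((MeasurableSet.singleton c).prod .univ)
  exact Filter.Eventually.mono ((mem_ae_iff_prob_eq_one hmeas).2 hω) fun ω hω => hω.1

end MarkovIncrements

section MarkovMultiplicative

variable {Ω S : Type*} {mΩ : MeasurableSpace Ω} [MeasurableSpace S] {P : Kernel S Ω}
  [IsMarkovKernel P] {ℱ : Filtration ℝ≥0 mΩ} {J : ℝ≥0 → Ω → S} {Z Zm : ℝ≥0 → Ω → ℝ}

lemma signChangeCount_eq_ncard (Z Zm : ℝ≥0 → Ω → ℝ) (t : ℝ≥0) (ω : Ω) :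
    signChangeCount Z Zm t ω = (signChangeTimes (Z · ω) (Zm · ω) 0 t).ncard := rfl

lemma signChangeCount_add_sub {ω : Ω} (hz : IsCadlagNonvanishing (Z · ω) (Zm · ω)) (s t : ℝ≥0) :
    (signChangeCount Z Zm (s + t) ω : ℝ) - signChangeCount Z Zm s ω =
      (signChangeTimes (Z · ω) (Zm · ω) s (s + t)).ncard := by
  rw [sub_eq_iff_eq_add', ← Nat.cast_add, Nat.cast_inj, ← Nat.cast_inj (R := ℕ∞), Nat.cast_add,
    signChangeCount_eq_ncard, signChangeCount_eq_ncard,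
    (hz.finite_signChangeTimes zero_le).cast_ncard_eq,
    (hz.finite_signChangeTimes zero_le).cast_ncard_eq,
    (hz.finite_signChangeTimes le_self_add).cast_ncard_eq,
    encard_signChangeTimes_add _ _ zero_le le_self_add]

lemma eq_neg_one_pow_signChangeCount_mul_exp {ω : Ω}
    (hz : IsCadlagNonvanishing (Z · ω) (Zm · ω)) (h0 : Z 0 ω = 1) (t : ℝ≥0) :
    Z t ω = (-1) ^ signChangeCount Z Zm t ω * Real.exp (-(-Real.log |Z t ω|)) := by
  have hdiv := hz.div_eq_neg_one_pow_ncard_mul_abs (zero_le (a := t))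
  rwa [h0, div_one, ← Real.exp_log (abs_pos.2 (hz.ne_zero t)), ← neg_neg (Real.log _)] at hdiv

/-- The increment over `(s, s + t]` of the additive pair `(-log |Z|, signChangeCount Z Zm)`. -/
noncomputable def additiveIncrement (Z Zm : ℝ≥0 → Ω → ℝ) (s t : ℝ≥0) (ω : Ω) : ℝ × ℝ :=
  (-Real.log |Z (s + t) ω| - -Real.log |Z s ω|,
    (signChangeCount Z Zm (s + t) ω : ℝ) - signChangeCount Z Zm s ω)

lemma eventually_gridIncrement_eq_additiveIncrement {ω : Ω}
    (hz : IsCadlagNonvanishing (Z · ω) (Zm · ω)) (s t : ℝ≥0) :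
    ∀ᶠ n in Filter.atTop, gridIncrement (Z · ω) s t n = additiveIncrement Z Zm s t ω := by
  rw [additiveIncrement, signChangeCount_add_sub hz]
  exact hz.eventually_gridIncrement_eq s t

lemma measurable_gridIncrement (hZ : ∀ t, Measurable (Z t)) (s t : ℝ≥0) (n : ℕ) :
    Measurable fun ω => gridIncrement (Z · ω) s t n :=
  Finset.measurable_fun_sum _ fun _ _ => measurable_logSign.comp ((hZ _).div (hZ _))

lemma measurable_additiveIncrement (hZ : ∀ t, Measurable (Z t))
    (hpath : ∀ ω, IsCadlagNonvanishing (Z · ω) (Zm · ω)) (s t : ℝ≥0) :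
    Measurable (additiveIncrement Z Zm s t) :=
  measurable_of_eventually_eq (measurable_gridIncrement hZ s t) fun ω =>
    eventually_gridIncrement_eq_additiveIncrement (hpath ω) s t

lemma hasMarkovIncrementLaw_gridIncrement (hJ : Adapted ℱ J)
    (hJ0 : ∀ j, ∀ᵐ ω ∂P j, J 0 ω = j) (hZ : Adapted ℱ Z)
    (hlaw : ∀ t, HasMarkovIncrementLaw P ℱ J t fun s ω => Z (s + t) ω / Z s ω) (t : ℝ≥0) (n : ℕ) :
    HasMarkovIncrementLaw P ℱ J t fun s ω => gridIncrement (Z · ω) s t n := by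
  have hratio : ∀ u s, Measurable[ℱ (s + u)] fun ω => Z (s + u) ω / Z s ω := fun u s =>
    (hZ _).div ((hZ s).mono (ℱ.mono le_self_add) le_rfl)
  have hsum := ((hlaw (t / (n + 1))).comp hJ (fun s => (hratio _ s).mono (ℱ.le _) le_rfl)
    measurable_logSign).sum_range hJ hJ0 (fun s => measurable_logSign.comp (hratio _ s)) (n + 1)
  rw [succ_nsmul_div_succ] at hsum
  simpa only [gridIncrement, regularGrid, succ_nsmul, add_assoc] using hsum

lemma hasMarkovIncrementLaw_additiveIncrement (hJ : Adapted ℱ J)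
    (hJ0 : ∀ j, ∀ᵐ ω ∂P j, J 0 ω = j) (hZ : Adapted ℱ Z)
    (hpath : ∀ ω, IsCadlagNonvanishing (Z · ω) (Zm · ω))
    (hlaw : ∀ t, HasMarkovIncrementLaw P ℱ J t fun s ω => Z (s + t) ω / Z s ω) (t : ℝ≥0) :
    HasMarkovIncrementLaw P ℱ J t (additiveIncrement Z Zm · t) :=
  hasMarkovIncrementLaw_of_eventually_eq hJ
    (fun n s => measurable_gridIncrement (fun _ => hZ.measurable) s t n)
    (fun n => hasMarkovIncrementLaw_gridIncrement hJ hJ0 hZ hlaw t n)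
    fun s ω => eventually_gridIncrement_eq_additiveIncrement (hpath ω) s t

theorem map_from_mmp_general (hJ : Adapted ℱ J) (hJ0 : ∀ j, ∀ᵐ ω ∂P j, J 0 ω = j)
    (hZ : Adapted ℱ Z) (hpath : ∀ ω, IsCadlagNonvanishing (Z · ω) (Zm · ω))
    (hMMP : ∀ t, HasMarkovIncrements P ℱ J t (fun s ω => Z (s + t) ω / Z s ω) (Z t)) :
    (∀ t ω, (signChangeTimes (Z · ω) (Zm · ω) 0 t).Finite) ∧
    (∀ t, HasMarkovIncrements P ℱ J t
      (fun s ω => (-Real.log |Z (s + t) ω| - -Real.log |Z s ω|,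
        (signChangeCount Z Zm (s + t) ω : ℝ) - signChangeCount Z Zm s ω))
      fun ω => (-Real.log |Z t ω|, (signChangeCount Z Zm t ω : ℝ))) ∧
    (∀ j t, ∀ᵐ ω ∂P j,
      Z t ω = (-1) ^ signChangeCount Z Zm t ω * Real.exp (-(-Real.log |Z t ω|))) ∧
    ∀ j, ∀ᵐ ω ∂P j, Z 0 ω = 1 := by
  have hZ0 : ∀ j, ∀ᵐ ω ∂P j, Z 0 ω = 1 := by
    refine HasMarkovIncrements.ae_eq_const ?_ hJ hJ0 hZ.measurable
    simpa only [add_zero, div_self ((hpath _).ne_zero _)] using hMMP 0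
  have hlaw : ∀ t, HasMarkovIncrementLaw P ℱ J t fun s ω => Z (s + t) ω / Z s ω := fun t => by
    refine ((hMMP t).congr fun k => ?_).hasMarkovIncrementLaw hJ fun s =>
      hZ.measurable.div hZ.measurable
    filter_upwards [hZ0 k] with ω hω
    rw [hω, zero_add, div_one]
  refine ⟨fun t ω => (hpath ω).finite_signChangeTimes zero_le, fun t => ?_, fun j t => ?_, hZ0⟩
  · refine ((hasMarkovIncrementLaw_additiveIncrement hJ hJ0 hZ hpath hlaw t).hasMarkovIncrements hJ
      (measurable_additiveIncrement (fun _ => hZ.measurable) hpath · t)).congr fun k => ?_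
    filter_upwards [hZ0 k] with ω hω
    simp [additiveIncrement, hω, signChangeCount]
  · filter_upwards [hZ0 j] with ω hω
    exact eq_neg_one_pow_signChangeCount_mul_exp (hpath ω) hω t

end MarkovMultiplicative

/-- Additive representation of a Markov multiplicative process (converse direction of
Theorem 2.4): setting `Ȳ_t = -log |Z_t|` and `K̄_t = #{s ∈ (0,t] : Z_s/Z_{s-} < 0}`,
the pair `((Ȳ, K̄), J)` is a bivariate MAP, `Z_t = (-1)^{K̄_t} e^{-Ȳ_t}` a.s. for each `t`,
and `Z_0 = 1` a.s. -/
theorem map_from_mmp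
    {Ω : Type*} [MeasurableSpace Ω]
    {S : Type*} [MeasurableSpace S] [MeasurableSingletonClass S] [Countable S]
    (F : ℝ≥0 → MeasurableSpace Ω)
    (hF_le : ∀ t, F t ≤ (inferInstance : MeasurableSpace Ω))
    (hF_mono : Monotone F)
    (J : ℝ≥0 → Ω → S) (Z : ℝ≥0 → Ω → ℝ) (Zm : ℝ≥0 → Ω → ℝ)
    (hJ_adapted : ∀ t, Measurable[F t] (J t))
    (hZ_adapted : ∀ t, Measurable[F t] (Z t))
    -- càdlàg paths with left limits Zm
    (hZ_right : ∀ ω t, ContinuousWithinAt (fun u => Z u ω) (Set.Ici t) t)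
    (hZ_left : ∀ ω t, 0 < t →
      Filter.Tendsto (fun u => Z u ω) (nhdsWithin t (Set.Iio t)) (nhds (Zm t ω)))
    (hZ_ne : ∀ t ω, Z t ω ≠ 0)
    (hZm_ne : ∀ t ω, 0 < t → Zm t ω ≠ 0)
    (P : S → Measure Ω) [∀ j, IsProbabilityMeasure (P j)]
    (hP0 : ∀ j, P j {ω | J 0 ω = j} = 1)
    -- the MMP property of (Z, J)
    (hMMP : ∀ (j : S) (s t : ℝ≥0) (f : ℝ → ℝ) (g : S → ℝ),
      Measurable f → (∃ C, ∀ x, |f x| ≤ C) →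
      Measurable g → (∃ C, ∀ x, |g x| ≤ C) →
      (P j)[(fun ω => f (Z (s + t) ω / Z s ω) * g (J (s + t) ω)) | F s]
        =ᵐ[P j] fun ω => ∫ ω', f (Z t ω') * g (J t ω') ∂(P (J s ω))) :
    -- the number of sign changes up to any time is finite
    (∀ t ω, {s : ℝ≥0 | s ∈ Set.Ioc 0 t ∧ Z s ω / Zm s ω < 0}.Finite) ∧
    -- ((Ȳ, K̄), J) is a bivariate MAP, with Ȳ_t = -log|Z_t| and K̄ = signChangeCount
    (∀ (j : S) (s t : ℝ≥0) (f : ℝ × ℝ → ℝ) (g : S → ℝ),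
      Measurable f → (∃ C, ∀ x, |f x| ≤ C) →
      Measurable g → (∃ C, ∀ x, |g x| ≤ C) →
      (P j)[(fun ω => f ((-Real.log |Z (s + t) ω|) - (-Real.log |Z s ω|),
          (signChangeCount Z Zm (s + t) ω : ℝ) - (signChangeCount Z Zm s ω : ℝ))
            * g (J (s + t) ω)) | F s]
        =ᵐ[P j] fun ω =>
          ∫ ω', f (-Real.log |Z t ω'|, (signChangeCount Z Zm t ω' : ℝ))
            * g (J t ω') ∂(P (J s ω))) ∧
    -- Z_t = (-1)^{K̄_t} e^{-Ȳ_t} a.s.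
    (∀ (j : S) (t : ℝ≥0), ∀ᵐ ω ∂(P j),
      Z t ω = (-1 : ℝ) ^ (signChangeCount Z Zm t ω) * Real.exp (-(-Real.log |Z t ω|))) ∧
    -- Z_0 = 1 a.s.
    (∀ j : S, ∀ᵐ ω ∂(P j), Z 0 ω = 1) := by
  let κ : Kernel S Ω := ⟨P, measurable_of_countable P⟩
  have : IsMarkovKernel κ := ⟨‹_›⟩
  have hJ0 : ∀ j, ∀ᵐ ω ∂κ j, J 0 ω = j := fun j =>
    (mem_ae_iff_prob_eq_one (((hJ_adapted 0).mono (hF_le 0) le_rfl) (.singleton j))).2 (hP0 j)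
  have hpath : ∀ ω, IsCadlagNonvanishing (Z · ω) (Zm · ω) := fun ω =>
    ⟨hZ_right ω, fun t ht => hZ_left ω t (not_isMin_iff_bot_lt.1 ht), (hZ_ne · ω),
      fun t ht => hZm_ne t ω (not_isMin_iff_bot_lt.1 ht)⟩
  obtain ⟨hfin, hmap, hexp, hone⟩ := map_from_mmp_general (P := κ) (ℱ := ⟨F, hF_mono, hF_le⟩)
    hJ_adapted hJ0 hZ_adapted hpath fun t j s => hMMP j s t
  exact ⟨hfin, fun j s t => hmap t j s, hexp, hone⟩
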